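/- The measurement-update map g is nonexpansive for the natural (Fisher/affine-invariant) distance: for every invertible real n×n matrix A and real n×n positive semidefinite symmetric matrices Q and 𝓘, and all real n×n positive definite symmetric matrices P₁, P₂, one has d(((A P₁ Aᵀ + Q)⁻¹ + 𝓘)⁻¹, ((A P₂ Aᵀ + Q)⁻¹ + 𝓘)⁻¹) ≤ d(P₁, P₂). -/

import Mathlib

open Matrix

noncomputable def matEigs {n : ℕ} (M : Matrix (Fin n) (Fin n) ℝ) : Fin n → ℝ := by
  classical exact if h : M.IsHermitian then h.eigenvalues else 0

/-- The positive semidefinite square root of a positive semidefinite matrix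
(the former Mathlib definition, for real matrices). -/
noncomputable def Matrix.PosSemidef.sqrt {n : Type*} [Fintype n] [DecidableEq n]
    {A : Matrix n n ℝ} (hA : A.PosSemidef) : Matrix n n ℝ :=
  hA.1.eigenvectorUnitary.1 * diagonal (Real.sqrt ∘ hA.1.eigenvalues) *
    (star hA.1.eigenvectorUnitary : Matrix n n ℝ)

noncomputable def matSqrt {n : ℕ} (M : Matrix (Fin n) (Fin n) ℝ) :
    Matrix (Fin n) (Fin n) ℝ := by
  classical exact if h : M.PosSemidef then h.sqrt else 0

/-- The natural (Fisher / affine-invariant) distance on positive definite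
matrices: `d(P₁,P₂) = (∑ᵢ (log λᵢ)²)^{1/2}` where `λᵢ` are the eigenvalues of
`P₂^{-1/2} P₁ P₂^{-1/2}`. -/
noncomputable def natDist {n : ℕ} (P₁ P₂ : Matrix (Fin n) (Fin n) ℝ) : ℝ :=
  Real.sqrt (∑ i : Fin n,
    Real.log (matEigs ((matSqrt P₂)⁻¹ * P₁ * (matSqrt P₂)⁻¹) i) ^ 2)

/-!
Let `R₁ = A P₁ Aᵀ + Q`, `R₂ = A P₂ Aᵀ + Q` and `C = R₂^{-1/2} A P₂^{1/2}`. The matrices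
`M = P₂^{-1/2} P₁ P₂^{-1/2}` and `N = R₂^{-1/2} R₁ R₂^{-1/2}` satisfy `N - 1 = C (M - 1) Cᵀ`, and
`C` is a contraction because `1 - C Cᵀ = R₂^{-1/2} Q R₂^{-1/2}`. By the Courant–Fischer dimension
count, each eigenvalue of `N` lies between `1` and the corresponding eigenvalue of `M`, so the
absolute value of its logarithm is no larger. Thus `P ↦ A P Aᵀ + Q` is nonexpansive. Inversion is
an isometry, and adding `𝓘` is the case `A = 1`, so `g` is a composition of nonexpansive maps.
-/

section DualVectors

variable {K V ι : Type*} [DivisionRing K] [AddCommGroup V] [Module K V] [FiniteDimensional K V]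
  [Fintype ι]

theorem exists_ne_zero_forall_apply_eq_zero (f : ι → V →ₗ[K] K)
    (h : Fintype.card ι < Module.finrank K V) : ∃ x ≠ 0, ∀ j, f j x = 0 := by
  have hker : LinearMap.ker (LinearMap.pi f) ≠ ⊥ :=
    LinearMap.ker_ne_bot_of_finrank_lt (by rwa [Module.finrank_fintype_fun_eq_card])
  obtain ⟨x, hx, hx0⟩ := Submodule.exists_mem_ne_zero_of_ne_bot hker
  exact ⟨x, hx0, fun j => congrFun (LinearMap.mem_ker.1 hx) j⟩

end DualVectors

section Eigenbasis

open scoped InnerProductSpace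

variable {𝕜 E F ι : Type*} [RCLike 𝕜] [NormedAddCommGroup E] [InnerProductSpace 𝕜 E]
  [NormedAddCommGroup F] [InnerProductSpace 𝕜 F]

theorem neg_apply_eq_neg_smul {b : ι → E} {T : E →ₗ[𝕜] E} {μ : ι → ℝ}
    (hb : ∀ j, T (b j) = (μ j : 𝕜) • b j) (j : ι) : (-T) (b j) = ((-μ) j : 𝕜) • b j := by
  simp [hb]

variable [Fintype ι]

theorem re_inner_apply_self_eq_sum (b : OrthonormalBasis ι 𝕜 E) {T : E →ₗ[𝕜] E} {μ : ι → ℝ}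
    (hb : ∀ j, T (b j) = (μ j : 𝕜) • b j) (x : E) :
    RCLike.re ⟪T x, x⟫_𝕜 = ∑ j, μ j * ‖⟪b j, x⟫_𝕜‖ ^ 2 := by
  have hTx : T x = ∑ j, ((μ j : 𝕜) * ⟪b j, x⟫_𝕜) • b j := by
    conv_lhs => rw [← b.sum_repr' x]
    simp only [map_sum, map_smul, hb, smul_smul, mul_comm]
  rw [hTx, sum_inner, map_sum]
  refine Finset.sum_congr rfl fun j _ => ?_
  rw [inner_smul_left, map_mul (starRingEnd 𝕜), RCLike.conj_ofReal, mul_assoc, RCLike.conj_mul,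
    RCLike.re_ofReal_mul]
  norm_cast

theorem mul_norm_sq_le_re_inner_apply_self (b : OrthonormalBasis ι 𝕜 E) {T : E →ₗ[𝕜] E}
    {μ : ι → ℝ} (hb : ∀ j, T (b j) = (μ j : 𝕜) • b j) {r : ℝ} {x : E}
    (h : ∀ j, ⟪b j, x⟫_𝕜 ≠ 0 → r ≤ μ j) : r * ‖x‖ ^ 2 ≤ RCLike.re ⟪T x, x⟫_𝕜 := by
  rw [re_inner_apply_self_eq_sum b hb, ← b.sum_sq_norm_inner_right, Finset.mul_sum]
  refine Finset.sum_le_sum fun j _ => ?_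
  by_cases hj : ⟪b j, x⟫_𝕜 = 0
  · simp [hj]
  · exact mul_le_mul_of_nonneg_right (h j hj) (sq_nonneg _)

theorem re_inner_apply_self_le_mul_norm_sq (b : OrthonormalBasis ι 𝕜 E) {T : E →ₗ[𝕜] E}
    {μ : ι → ℝ} (hb : ∀ j, T (b j) = (μ j : 𝕜) • b j) {r : ℝ} {x : E}
    (h : ∀ j, ⟪b j, x⟫_𝕜 ≠ 0 → μ j ≤ r) : RCLike.re ⟪T x, x⟫_𝕜 ≤ r * ‖x‖ ^ 2 := by
  have hneg := mul_norm_sq_le_re_inner_apply_self b (T := -T) (μ := -μ) (r := -r) (x := x)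
    (neg_apply_eq_neg_smul hb) (fun j hj => neg_le_neg (h j hj))
  simpa using hneg

theorem exists_ne_zero_forall_inner_eq_zero [LinearOrder ι] (b : OrthonormalBasis ι 𝕜 E)
    (c : ι → F) (C : E →ₗ[𝕜] F) (i : ι) :
    ∃ x ≠ 0, (∀ j, i < j → ⟪b j, x⟫_𝕜 = 0) ∧ ∀ j < i, ⟪c j, C x⟫_𝕜 = 0 := by
  have := b.toBasis.finiteDimensional_of_finite
  have hcard : Fintype.card {j // j ≠ i} < Module.finrank 𝕜 E := by
    rw [Module.finrank_eq_card_basis b.toBasis]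
    exact Fintype.card_subtype_lt (x := i) (by simp)
  obtain ⟨x, hx0, hx⟩ := exists_ne_zero_forall_apply_eq_zero (fun j : {j // j ≠ i} =>
    if i < j then (innerₛₗ 𝕜 (b j) : E →ₗ[𝕜] 𝕜) else innerₛₗ 𝕜 (c j) ∘ₗ C) hcard
  refine ⟨x, hx0, fun j hj => ?_, fun j hj => ?_⟩
  · simpa [hj] using hx ⟨j, hj.ne'⟩
  · simpa [hj.not_gt] using hx ⟨j, hj.ne⟩

theorem le_max_of_re_inner_sub_le [LinearOrder ι] (b : OrthonormalBasis ι 𝕜 E)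
    (c : OrthonormalBasis ι 𝕜 F) {S : E →ₗ[𝕜] E} {T : F →ₗ[𝕜] F} {μ ν : ι → ℝ}
    (hb : ∀ j, S (b j) = (μ j : 𝕜) • b j) (hc : ∀ j, T (c j) = (ν j : 𝕜) • c j)
    (hμ : Antitone μ) (hν : Antitone ν) {C : E →ₗ[𝕜] F} (hC : ∀ x, ‖C x‖ ≤ ‖x‖) {t : ℝ}
    (h : ∀ x, RCLike.re ⟪S x, x⟫_𝕜 - t * ‖x‖ ^ 2 ≤ RCLike.re ⟪T (C x), C x⟫_𝕜 - t * ‖C x‖ ^ 2)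
    (i : ι) : μ i ≤ max t (ν i) := by
  obtain ⟨x, hx0, hbx, hcx⟩ := exists_ne_zero_forall_inner_eq_zero b c C i
  have hSx : μ i * ‖x‖ ^ 2 ≤ RCLike.re ⟪S x, x⟫_𝕜 :=
    mul_norm_sq_le_re_inner_apply_self b hb fun j hj => hμ (not_lt.1 (mt (hbx j) hj))
  have hTx : RCLike.re ⟪T (C x), C x⟫_𝕜 ≤ max t (ν i) * ‖C x‖ ^ 2 :=
    re_inner_apply_self_le_mul_norm_sq c hc fun j hj =>
      (hν (not_lt.1 (mt (hcx j) hj))).trans (le_max_right _ _)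
  have hgap : (μ i - t) * ‖x‖ ^ 2 ≤ (max t (ν i) - t) * ‖x‖ ^ 2 := calc
    (μ i - t) * ‖x‖ ^ 2 ≤ RCLike.re ⟪S x, x⟫_𝕜 - t * ‖x‖ ^ 2 := by linarith
    _ ≤ RCLike.re ⟪T (C x), C x⟫_𝕜 - t * ‖C x‖ ^ 2 := h x
    _ ≤ (max t (ν i) - t) * ‖C x‖ ^ 2 := by linarith
    _ ≤ (max t (ν i) - t) * ‖x‖ ^ 2 := by
      have : 0 ≤ max t (ν i) - t := sub_nonneg.2 (le_max_left _ _)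
      gcongr
      exact hC x
  have hx_pos : 0 < ‖x‖ ^ 2 := by positivity
  linarith [le_of_mul_le_mul_right hgap hx_pos]

theorem mem_uIcc_of_re_inner_sub_eq [LinearOrder ι] (b : OrthonormalBasis ι 𝕜 E)
    (c : OrthonormalBasis ι 𝕜 F) {S : E →ₗ[𝕜] E} {T : F →ₗ[𝕜] F} {μ ν : ι → ℝ}
    (hb : ∀ j, S (b j) = (μ j : 𝕜) • b j) (hc : ∀ j, T (c j) = (ν j : 𝕜) • c j)
    (hμ : Antitone μ) (hν : Antitone ν) {C : E →ₗ[𝕜] F} (hC : ∀ x, ‖C x‖ ≤ ‖x‖) {t : ℝ}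
    (h : ∀ x, RCLike.re ⟪S x, x⟫_𝕜 - t * ‖x‖ ^ 2 = RCLike.re ⟪T (C x), C x⟫_𝕜 - t * ‖C x‖ ^ 2)
    (i : ι) : μ i ∈ Set.uIcc t (ν i) := by
  refine ⟨?_, le_max_of_re_inner_sub_le b c hb hc hμ hν hC (fun x => (h x).le) i⟩
  -- The lower bound is the upper bound for `-S` and `-T`, with the index order reversed.
  have hneg : -μ i ≤ max (-t) (-ν i) :=
    le_max_of_re_inner_sub_le (ι := ιᵒᵈ) (S := -S) (T := -T) (μ := -μ) (ν := -ν) (t := -t)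
      b c (neg_apply_eq_neg_smul hb) (neg_apply_eq_neg_smul hc)
      (fun _ _ hjk => neg_le_neg (hμ hjk)) (fun _ _ hjk => neg_le_neg (hν hjk)) hC
      (fun x => by
        simp only [LinearMap.neg_apply, inner_neg_left, map_neg]
        linarith [h x]) i
  rwa [max_neg_neg, neg_le_neg_iff] at hneg

end Eigenbasis

section Congruence

open scoped ComplexOrder

variable {m k : Type*} [Fintype k]

theorem dotProduct_mul_mul_conjTranspose_mulVec [Fintype m] {R : Type*} [NonUnitalSemiring R]
    [StarRing R] (A : Matrix m k R) (P : Matrix k k R) (x : m → R) :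
    star x ⬝ᵥ ((A * P * Aᴴ) *ᵥ x) = star (Aᴴ *ᵥ x) ⬝ᵥ (P *ᵥ (Aᴴ *ᵥ x)) := by
  rw [← mulVec_mulVec, ← mulVec_mulVec, dotProduct_mulVec, star_mulVec, conjTranspose_conjTranspose]

theorem posDef_mul_mul_conjTranspose_add [Finite m] {R : Type*} [Ring R] [PartialOrder R]
    [StarRing R] [StarOrderedRing R] {A : Matrix m k R} {P : Matrix k k R} {Q : Matrix m m R}
    (hAQ : (A * Aᴴ + Q).PosDef) (hP : P.PosDef) (hQ : Q.PosSemidef) :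
    (A * P * Aᴴ + Q).PosDef := by
  have := Fintype.ofFinite m
  refine .of_dotProduct_mulVec_pos ((isHermitian_mul_mul_conjTranspose A hP.1).add hQ.1)
    fun x hx => ?_
  rw [add_mulVec, dotProduct_add, dotProduct_mul_mul_conjTranspose_mulVec]
  by_cases hAx : Aᴴ *ᵥ x = 0
  · have hpos := hAQ.dotProduct_mulVec_pos hx
    rw [add_mulVec, ← mulVec_mulVec, hAx, mulVec_zero, zero_add] at hpos
    simpa only [hAx, mulVec_zero, dotProduct_zero, zero_add] using hpos
  · exact add_pos_of_pos_of_nonneg (hP.dotProduct_mulVec_pos hAx) (hQ.dotProduct_mulVec_nonneg x)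

variable {𝕜 : Type*} [RCLike 𝕜] [Fintype m] [DecidableEq m]

theorem inner_toEuclideanLin_mul_mul_conjTranspose [DecidableEq k] (A : Matrix m k 𝕜)
    (B : Matrix k k 𝕜) (x : EuclideanSpace 𝕜 m) :
    inner 𝕜 (toEuclideanLin (A * B * Aᴴ) x) x =
      inner 𝕜 (toEuclideanLin B (toEuclideanLin Aᴴ x)) (toEuclideanLin Aᴴ x) := by
  rw [toEuclideanLin_conjTranspose_eq_adjoint, LinearMap.adjoint_inner_right,
    ← toEuclideanLin_conjTranspose_eq_adjoint]
  simp

theorem norm_toEuclideanLin_conjTranspose_le {C : Matrix m k 𝕜} (hC : (1 - C * Cᴴ).PosSemidef)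
    (x : EuclideanSpace 𝕜 m) : ‖toEuclideanLin Cᴴ x‖ ≤ ‖x‖ := by
  classical
  have hCx := inner_toEuclideanLin_mul_mul_conjTranspose C 1 x
  have hpos := (isPositive_toEuclideanLin_iff.2 hC).re_inner_nonneg_left x
  rw [Matrix.mul_one] at hCx
  simp only [map_sub, LinearMap.sub_apply, inner_sub_left, hCx, toLpLin_one, LinearMap.id_apply,
    inner_self_eq_norm_sq] at hpos
  exact le_of_sq_le_sq (sub_nonneg.1 hpos) (norm_nonneg _)

theorem eigenvalues_mem_uIcc_of_sub_smul_one_eq {A B C : Matrix m m 𝕜} (hA : A.IsHermitian)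
    (hB : B.IsHermitian) (hC : (1 - C * Cᴴ).PosSemidef) {t : ℝ}
    (h : B - (t : 𝕜) • (1 : Matrix m m 𝕜) = C * (A - (t : 𝕜) • (1 : Matrix m m 𝕜)) * Cᴴ) (i : m) :
    hB.eigenvalues i ∈ Set.uIcc t (hA.eigenvalues i) := by
  have hA' := isSymmetric_toEuclideanLin_iff.2 hA
  have hB' := isSymmetric_toEuclideanLin_iff.2 hB
  refine mem_uIcc_of_re_inner_sub_eq (hB'.eigenvectorBasis finrank_euclideanSpace)
    (hA'.eigenvectorBasis finrank_euclideanSpace)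
    (hB'.apply_eigenvectorBasis finrank_euclideanSpace)
    (hA'.apply_eigenvectorBasis finrank_euclideanSpace) hB.eigenvalues₀_antitone
    hA.eigenvalues₀_antitone (norm_toEuclideanLin_conjTranspose_le hC) (fun x => ?_) _
  have hform := congrArg RCLike.re
    (inner_toEuclideanLin_mul_mul_conjTranspose C (A - (t : 𝕜) • (1 : Matrix m m 𝕜)) x)
  simpa only [← h, map_sub, map_smul, toLpLin_one, LinearMap.sub_apply, LinearMap.smul_apply,
    LinearMap.id_apply, inner_sub_left, inner_smul_left, RCLike.conj_ofReal,
    RCLike.re_ofReal_mul, inner_self_eq_norm_sq] using hform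

end Congruence

section MatSqrt

variable {n : ℕ} {P : Matrix (Fin n) (Fin n) ℝ}

open scoped MatrixOrder

theorem matSqrt_eq_cfcSqrt (hP : P.PosSemidef) : matSqrt P = CFC.sqrt P := by
  rw [CFC.sqrt_eq_real_sqrt P hP.nonneg, cfcₙ_eq_cfc, hP.1.cfc_eq, matSqrt, dif_pos hP]
  rfl

theorem matSqrt_mul_self (hP : P.PosSemidef) : matSqrt P * matSqrt P = P := by
  rw [matSqrt_eq_cfcSqrt hP, CFC.sqrt_mul_sqrt_self P hP.nonneg]

theorem isHermitian_matSqrt (hP : P.PosSemidef) : (matSqrt P).IsHermitian := by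
  rw [matSqrt_eq_cfcSqrt hP]
  exact (CFC.sqrt_nonneg P).posSemidef.1

theorem isUnit_det_matSqrt (hP : P.PosDef) : IsUnit (matSqrt P).det := by
  have hdet : IsUnit ((matSqrt P).det * (matSqrt P).det) := by
    rw [← det_mul, matSqrt_mul_self hP.posSemidef]
    exact (isUnit_iff_isUnit_det P).1 hP.isUnit
  exact isUnit_of_mul_isUnit_left hdet

theorem inv_matSqrt_mul_mul_inv_matSqrt (hP : P.PosDef) :
    (matSqrt P)⁻¹ * P * (matSqrt P)⁻¹ = 1 := by
  have hS := isUnit_det_matSqrt hP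
  nth_rw 2 [← matSqrt_mul_self hP.posSemidef]
  rw [nonsing_inv_mul_cancel_left _ _ hS, mul_nonsing_inv _ hS]

end MatSqrt

section NatDist

variable {n : ℕ} {A P₁ P₂ Q R₁ R₂ : Matrix (Fin n) (Fin n) ℝ}

/-- The matrix `P₂^{-1/2} P₁ P₂^{-1/2}` of `P₁` relative to `P₂`, whose eigenvalues define
`natDist P₁ P₂`. -/
noncomputable def relMat (P₁ P₂ : Matrix (Fin n) (Fin n) ℝ) : Matrix (Fin n) (Fin n) ℝ :=
  (matSqrt P₂)⁻¹ * P₁ * (matSqrt P₂)⁻¹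

theorem isHermitian_relMat (h₁ : P₁.IsHermitian) (h₂ : P₂.PosSemidef) :
    (relMat P₁ P₂).IsHermitian := by
  have hS := (isHermitian_matSqrt h₂).inv
  simpa only [relMat, hS.eq] using isHermitian_mul_mul_conjTranspose (matSqrt P₂)⁻¹ h₁

theorem posDef_relMat (h₁ : P₁.PosDef) (h₂ : P₂.PosDef) : (relMat P₁ P₂).PosDef := by
  have hS := (isHermitian_matSqrt h₂.posSemidef).inv
  have hunit : IsUnit (matSqrt P₂)⁻¹ :=
    (isUnit_iff_isUnit_det _).2 (isUnit_nonsing_inv_det _ (isUnit_det_matSqrt h₂))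
  simpa only [relMat, hS.eq] using
    h₁.mul_mul_conjTranspose_same (vecMul_injective_of_isUnit hunit)

theorem relMat_sub_one (h₂ : P₂.PosDef) :
    relMat P₁ P₂ - 1 = (matSqrt P₂)⁻¹ * (P₁ - P₂) * (matSqrt P₂)⁻¹ := by
  rw [relMat, Matrix.mul_sub, Matrix.sub_mul, inv_matSqrt_mul_mul_inv_matSqrt h₂]

theorem matSqrt_mul_relMat_sub_one_mul_matSqrt (h₂ : P₂.PosDef) :
    matSqrt P₂ * (relMat P₁ P₂ - 1) * matSqrt P₂ = P₁ - P₂ := by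
  have hS := isUnit_det_matSqrt h₂
  rw [relMat_sub_one h₂, ← Matrix.mul_assoc, mul_nonsing_inv_cancel_left _ _ hS]
  exact nonsing_inv_mul_cancel_right _ _ hS

theorem charpoly_relMat (h₂ : P₂.PosSemidef) :
    (relMat P₁ P₂).charpoly = (P₁ * P₂⁻¹).charpoly := by
  rw [relMat, Matrix.mul_assoc, charpoly_mul_comm, Matrix.mul_assoc, ← Matrix.mul_inv_rev,
    matSqrt_mul_self h₂]

theorem natDist_eq_sqrt_sum_eigenvalues (h : (relMat P₁ P₂).IsHermitian) :
    natDist P₁ P₂ = √(∑ i, Real.log (h.eigenvalues i) ^ 2) := by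
  have hEigs : matEigs (relMat P₁ P₂) = h.eigenvalues := dif_pos h
  rw [← hEigs]
  rfl

theorem natDist_inv_inv (h₁ : P₁.PosDef) (h₂ : P₂.PosDef) :
    natDist P₁⁻¹ P₂⁻¹ = natDist P₂ P₁ := by
  have hinv := isHermitian_relMat h₁.inv.1 h₂.inv.posSemidef
  have hswap := isHermitian_relMat h₂.1 h₁.posSemidef
  have hcharpoly : (relMat P₁⁻¹ P₂⁻¹).charpoly = (relMat P₂ P₁).charpoly := by
    rw [charpoly_relMat h₂.inv.posSemidef, charpoly_relMat h₁.posSemidef, charpoly_mul_comm,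
      nonsing_inv_nonsing_inv _ ((isUnit_iff_isUnit_det _).1 h₂.isUnit)]
  rw [natDist_eq_sqrt_sum_eigenvalues hinv, natDist_eq_sqrt_sum_eigenvalues hswap,
    (hinv.eigenvalues_eq_eigenvalues_iff hswap).2 hcharpoly]

theorem log_sq_le_log_sq_of_mem_uIcc {x y : ℝ} (hy : 0 < y) (hx : x ∈ Set.uIcc 1 y) :
    Real.log x ^ 2 ≤ Real.log y ^ 2 := by
  have hmono : MonotoneOn Real.log (Set.uIcc 1 y) :=
    Real.strictMonoOn_log.monotoneOn.mono fun z hz => (lt_min one_pos hy).trans_le hz.1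
  have hlog := Set.abs_sub_left_of_mem_uIcc (hmono.mapsTo_uIcc hx)
  rw [Real.log_one, sub_zero, sub_zero] at hlog
  exact sq_le_sq.2 hlog

theorem eigenvalues_relMat_mem_uIcc (hP : P₂.PosDef) (hR : R₂.PosDef)
    (hAR : (R₂ - A * P₂ * Aᴴ).PosSemidef) (hsub : R₁ - R₂ = A * (P₁ - P₂) * Aᴴ)
    (hM : (relMat P₁ P₂).IsHermitian) (hN : (relMat R₁ R₂).IsHermitian) (i : Fin n) :
    hN.eigenvalues i ∈ Set.uIcc 1 (hM.eigenvalues i) := by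
  set S := matSqrt P₂
  set T := matSqrt R₂
  have hTinv : T⁻¹ᴴ = T⁻¹ := (isHermitian_matSqrt hR.posSemidef).inv.eq
  have hCstar : (T⁻¹ * A * S)ᴴ = S * Aᴴ * T⁻¹ := by
    rw [conjTranspose_mul, conjTranspose_mul, hTinv, (isHermitian_matSqrt hP.posSemidef).eq,
      Matrix.mul_assoc]
  have hcontraction : 1 - (T⁻¹ * A * S) * (T⁻¹ * A * S)ᴴ =
      T⁻¹ * (R₂ - A * P₂ * Aᴴ) * T⁻¹ᴴ := calc
    _ = T⁻¹ * R₂ * T⁻¹ - T⁻¹ * (A * (S * S) * Aᴴ) * T⁻¹ := by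
      rw [inv_matSqrt_mul_mul_inv_matSqrt hR, hCstar]
      noncomm_ring
    _ = T⁻¹ * (R₂ - A * P₂ * Aᴴ) * T⁻¹ᴴ := by
      rw [matSqrt_mul_self hP.posSemidef, hTinv, Matrix.mul_sub, Matrix.sub_mul]
  have hcongr : relMat R₁ R₂ - 1 = (T⁻¹ * A * S) * (relMat P₁ P₂ - 1) * (T⁻¹ * A * S)ᴴ := calc
    _ = T⁻¹ * (A * (S * (relMat P₁ P₂ - 1) * S) * Aᴴ) * T⁻¹ := by
      rw [relMat_sub_one hR, hsub, matSqrt_mul_relMat_sub_one_mul_matSqrt hP]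
    _ = (T⁻¹ * A * S) * (relMat P₁ P₂ - 1) * (T⁻¹ * A * S)ᴴ := by
      rw [hCstar]
      noncomm_ring
  exact eigenvalues_mem_uIcc_of_sub_smul_one_eq hM hN
    (hcontraction ▸ hAR.mul_mul_conjTranspose_same T⁻¹)
    (by simpa only [RCLike.ofReal_one, one_smul] using hcongr) i

theorem natDist_mul_mul_conjTranspose_add_le (h₁ : P₁.PosDef) (h₂ : P₂.PosDef)
    (hQ : Q.PosSemidef) (hR : (A * P₂ * Aᴴ + Q).PosDef) :
    natDist (A * P₁ * Aᴴ + Q) (A * P₂ * Aᴴ + Q) ≤ natDist P₁ P₂ := by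
  have hM := posDef_relMat h₁ h₂
  have hN := isHermitian_relMat ((isHermitian_mul_mul_conjTranspose A h₁.1).add hQ.1) hR.posSemidef
  rw [natDist_eq_sqrt_sum_eigenvalues hN, natDist_eq_sqrt_sum_eigenvalues hM.1]
  refine Real.sqrt_le_sqrt (Finset.sum_le_sum fun i _ => ?_)
  refine log_sq_le_log_sq_of_mem_uIcc (hM.eigenvalues_pos i) ?_
  exact eigenvalues_relMat_mem_uIcc h₂ hR (by rwa [add_sub_cancel_left])
    (by rw [add_sub_add_right_eq_sub, Matrix.mul_sub, Matrix.sub_mul]) hM.1 hN i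

end NatDist

theorem riccatiG_nonexpansive_general {n : ℕ} (A Q I : Matrix (Fin n) (Fin n) ℝ)
    (hAQ : (A * Aᵀ + Q).PosDef) (hQ : Q.PosSemidef) (hI : I.PosSemidef)
    (P₁ P₂ : Matrix (Fin n) (Fin n) ℝ) (h₁ : P₁.PosDef) (h₂ : P₂.PosDef) :
    natDist ((A * P₁ * Aᵀ + Q)⁻¹ + I)⁻¹ ((A * P₂ * Aᵀ + Q)⁻¹ + I)⁻¹
      ≤ natDist P₁ P₂ := by
  rw [← conjTranspose_eq_transpose_of_trivial] at hAQ ⊢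
  set R₁ := A * P₁ * Aᴴ + Q
  set R₂ := A * P₂ * Aᴴ + Q
  have hR₁ : R₁.PosDef := posDef_mul_mul_conjTranspose_add hAQ h₁ hQ
  have hR₂ : R₂.PosDef := posDef_mul_mul_conjTranspose_add hAQ h₂ hQ
  have hRI₁ : (R₁⁻¹ + I).PosDef := hR₁.inv.add_posSemidef hI
  have hRI₂ : (R₂⁻¹ + I).PosDef := hR₂.inv.add_posSemidef hI
  calc natDist (R₁⁻¹ + I)⁻¹ (R₂⁻¹ + I)⁻¹
      = natDist (R₂⁻¹ + I) (R₁⁻¹ + I) := natDist_inv_inv hRI₁ hRI₂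
    _ ≤ natDist R₂⁻¹ R₁⁻¹ := by
      simpa using
        natDist_mul_mul_conjTranspose_add_le (A := 1) hR₂.inv hR₁.inv hI (by simpa using hRI₁)
    _ = natDist R₁ R₂ := natDist_inv_inv hR₂ hR₁
    _ ≤ natDist P₁ P₂ := natDist_mul_mul_conjTranspose_add_le h₁ h₂ hQ hR₂

/-- The measurement-update map
`g(P) = ((A P Aᵀ + Q)⁻¹ + 𝓘)⁻¹` is nonexpansive for the natural
(Fisher / affine-invariant) distance. -/
theorem riccatiG_nonexpansive
    {n : ℕ} (A Q I : Matrix (Fin n) (Fin n) ℝ)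
    (hA : IsUnit A.det) (hQ : Q.PosSemidef) (hI : I.PosSemidef)
    (P₁ P₂ : Matrix (Fin n) (Fin n) ℝ) (h₁ : P₁.PosDef) (h₂ : P₂.PosDef) :
    natDist ((A * P₁ * Aᵀ + Q)⁻¹ + I)⁻¹ ((A * P₂ * Aᵀ + Q)⁻¹ + I)⁻¹
      ≤ natDist P₁ P₂ := by
  have hA_inj := vecMul_injective_of_isUnit ((isUnit_iff_isUnit_det A).2 hA)
  exact riccatiG_nonexpansive_general A Q I
    ((PosDef.mul_conjTranspose_self A hA_inj).add_posSemidef hQ) hQ hI P₁ P₂ h₁ h₂
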